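/- Let β ∈ (σ,1). Then X*_β = (1 − β + β²)(β² + β − 1)/((2−β)(1+β)²) is strictly positive, satisfies F_β(X*_β) = X*_β, and is the unique strictly positive fixed point of F_β. (X*_β is the value of the gap n₂ − n₁ along the periodic orbit Γ on the indifference set J.) -/

import Mathlib

/-- The one-dimensional return map on the indifference set J of the Shapley
family. -/
noncomputable def retMap (β X : ℝ) : ℝ :=
  X*(1 + β)*(1 + 2*β)*(1 - β + β^2)
    / ((2 - β)*(3*(1 + β)^2*X + (2 + β)*(1 - β + β^2)))

/-- A positive `X` is fixed by the return map exactly when it is the explicit value `X*_β`. -/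
theorem retMap_eq_self_iff {β X : ℝ} (h₀ : 0 < β) (h₂ : β < 2) (hX : 0 < X) :
    retMap β X = X ↔ X = (1 - β + β^2)*(β^2 + β - 1)/((2 - β)*(1 + β)^2) := by
  have hq : 0 < 1 - β + β^2 := by nlinarith [sq_nonneg (β - 1)]
  have hβ : 0 < 2 - β := by linarith
  have hden : 0 < (2 - β)*(3*(1 + β)^2*X + (2 + β)*(1 - β + β^2)) := by positivity
  have hden' : 0 < (2 - β)*(1 + β)^2 := by positivity
  rw [retMap, div_eq_iff hden.ne', eq_div_iff hden'.ne']
  constructor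
  · intro h
    apply mul_left_cancel₀ hX.ne'
    linear_combination -h / 3
  · intro h
    linear_combination -3 * X * h

/-- for β ∈ (σ,1), σ = (√5−1)/2 the golden mean, the quantity
X*_β = (1−β+β²)(β²+β−1)/((2−β)(1+β)²) is positive and is the unique strictly
positive fixed point of the return map F_β. -/
theorem stmt16 (β : ℝ) (hβ : β ∈ Set.Ioo ((Real.sqrt 5 - 1)/2) 1) :
    0 < (1 - β + β^2)*(β^2 + β - 1)/((2 - β)*(1 + β)^2) ∧
    retMap β ((1 - β + β^2)*(β^2 + β - 1)/((2 - β)*(1 + β)^2))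
      = (1 - β + β^2)*(β^2 + β - 1)/((2 - β)*(1 + β)^2) ∧
    (∀ X : ℝ, 0 < X → retMap β X = X →
      X = (1 - β + β^2)*(β^2 + β - 1)/((2 - β)*(1 + β)^2)) := by
  obtain ⟨hσ, h1⟩ := hβ
  have h5 : Real.sqrt 5 ^ 2 = 5 := Real.sq_sqrt (by norm_num)
  have hs : 1 < Real.sqrt 5 := by
    rw [Real.lt_sqrt] <;> norm_num
  have h0 : 0 < β := by linarith
  have hgold : 0 < β^2 + β - 1 := by nlinarith
  have hq : 0 < 1 - β + β^2 := by nlinarith [sq_nonneg (β - 1)]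
  have h2 : 0 < 2 - β := by linarith
  have hpos : 0 < (1 - β + β^2)*(β^2 + β - 1)/((2 - β)*(1 + β)^2) := by positivity
  exact ⟨hpos, (retMap_eq_self_iff h0 (by linarith) hpos).2 rfl,
    fun X hX hfix => (retMap_eq_self_iff h0 (by linarith) hX).1 hfix⟩
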